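/- arXiv:1512.05752 — 3 statements merged into one kernel-verified Lean document; each statement's English description precedes it below -/
import Mathlib

section
/- Let L be a left Leibniz algebra over a field F, let H be a subalgebra of L whose multiplication is antisymmetric (so H is a Lie algebra), and let A be an ideal of L with A·A = 0 and A·L = 0 such that L = A ⊕ H as vector spaces. Then the vector space A ⊕ H equipped with the product [a+h, b+k] = hb − ka + hk (for a,b ∈ A, h,k ∈ H, where the products on the right are those of L) is a Lie algebra, called the companion Lie algebra of L. -/
/-!
Basic theory of (left) Leibniz algebras, formalized over an arbitrary field `F`.
A Leibniz algebra structure on an `F`-vector space `L` is given by a bilinear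
multiplication `m : L →ₗ[F] L →ₗ[F] L` satisfying the left Leibniz identity.
-/

open Submodule Module

section LeibnizDefs

variable {F : Type*} [Field F] {L : Type*} [AddCommGroup L] [Module F L]
variable (m : L →ₗ[F] L →ₗ[F] L)

/-- The left Leibniz identity: `a(bc) = (ab)c + b(ac)`. -/
def IsLeibniz : Prop :=
  ∀ a b c : L, m a (m b c) = m (m a b) c + m b (m a c)

/-- The multiplication is antisymmetric, i.e. the algebra is a Lie algebra. -/
def IsLie : Prop := ∀ a b : L, m a b = - m b a

/-- The product of two subspaces: the span of all products `x·y`, `x ∈ P`, `y ∈ Q`. -/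
abbrev mprod (P Q : Submodule F L) : Submodule F L := Submodule.map₂ m P Q

/-- A subalgebra: a subspace closed under multiplication. -/
def IsSubalg (S : Submodule F L) : Prop := ∀ x ∈ S, ∀ y ∈ S, m x y ∈ S

/-- An ideal of `L`: a subspace `I` with `L·I ⊆ I` and `I·L ⊆ I`. -/
def IsIdeal (I : Submodule F L) : Prop :=
  ∀ (x : L), ∀ y ∈ I, m x y ∈ I ∧ m y x ∈ I

/-- An ideal `I` of a subalgebra `S`. -/
def IsIdealOf (S I : Submodule F L) : Prop :=
  I ≤ S ∧ ∀ x ∈ S, ∀ y ∈ I, m x y ∈ I ∧ m y x ∈ I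

/-- A minimal ideal: a nonzero ideal containing no nonzero proper subideal of `L`. -/
def IsMinIdeal (A : Submodule F L) : Prop :=
  IsIdeal m A ∧ A ≠ ⊥ ∧ ∀ J, IsIdeal m J → J ≤ A → J = ⊥ ∨ J = A

/-- The derived series of a subspace: `S^(0) = S`, `S^(n+1) = S^(n)·S^(n)`. -/
def derSeries (S : Submodule F L) : ℕ → Submodule F L
  | 0 => S
  | n + 1 => mprod m (derSeries S n) (derSeries S n)

/-- A subalgebra is solvable if its derived series reaches `0`. -/
def IsSolvableSub (S : Submodule F L) : Prop := ∃ n, derSeries m S n = ⊥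

/-- The Leibniz algebra `L` is solvable. -/
abbrev IsSolvableAlg : Prop := IsSolvableSub m (⊤ : Submodule F L)

/-- The lower central series of a subspace: `N^1 = N`, `N^(k+1) = N·N^k`. -/
def lcSeries (N : Submodule F L) : ℕ → Submodule F L
  | 0 => N
  | k + 1 => mprod m N (lcSeries N k)

/-- A subalgebra is nilpotent if its lower central series reaches `0`. -/
def IsNilpotentSub (N : Submodule F L) : Prop := ∃ k, lcSeries m N k = ⊥

/-- A subalgebra `S` is strongly solvable if `S² = S·S` is nilpotent. -/
def IsStronglySolvable (S : Submodule F L) : Prop :=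
  IsNilpotentSub m (mprod m S S)

/-- A maximal subalgebra: a proper subalgebra not contained in any larger proper
subalgebra. -/
def IsMaxSubalg (S : Submodule F L) : Prop :=
  IsSubalg m S ∧ S ≠ ⊤ ∧ ∀ T, IsSubalg m T → S ≤ T → T = S ∨ T = ⊤

/-- The Frattini subalgebra `F(L)`: the intersection of all maximal subalgebras. -/
def frattiniSub : Submodule F L := sInf {S | IsMaxSubalg m S}

/-- The Frattini ideal `φ(L)`: the largest ideal contained in the Frattini
subalgebra. -/
def frattiniIdeal : Submodule F L :=
  sSup {I | IsIdeal m I ∧ I ≤ frattiniSub m}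

/-- `Leib(L)`: the span of all squares `x·x`. -/
def leibIdeal : Submodule F L := Submodule.span F {z | ∃ x : L, z = m x x}

/-- The subalgebra generated by a set. -/
def genBy (s : Set L) : Submodule F L := sInf {S | IsSubalg m S ∧ s ⊆ S}

/-- A subalgebra is two-generated if it is generated as an algebra by two elements. -/
def TwoGenerated (S : Submodule F L) : Prop := ∃ x y : L, genBy m {x, y} = S

/-- A subalgebra `S` is supersolvable if there is a chain of ideals of `S`,
`0 = S₀ ⊂ S₁ ⊂ ⋯ ⊂ Sₙ = S`, with `dim Sᵢ = i`. -/
def IsSupersolvable (S : Submodule F L) : Prop :=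
  ∃ (n : ℕ) (c : ℕ → Submodule F L), c 0 = ⊥ ∧ c n = S ∧
    (∀ i, i < n → c i ≤ c (i + 1)) ∧
    (∀ i, i ≤ n → IsIdealOf m S (c i)) ∧
    (∀ i, i ≤ n → Module.finrank F (c i) = i)

/-- A subspace `S` is nil on `L` if left multiplication by each of its elements is a
nilpotent operator. -/
def IsNilOn (S : Submodule F L) : Prop :=
  ∀ x ∈ S, IsNilpotent (m x : Module.End F L)

open scoped TensorProduct in
/-- A subspace `S` is triangulable on `L` if, after extending scalars to the algebraic
closure `K` of `F`, the space `K ⊗ L` admits a basis with respect to which the left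
multiplication operators by all elements of `K ⊗ S` are upper triangular matrices.
(Since upper triangular matrices form a `K`-subspace of matrices, it suffices that the
base-changed left multiplication by each `x ∈ S` is upper triangular.) -/
def IsTriangulableOn (S : Submodule F L) : Prop :=
  ∃ (n : ℕ) (b : Basis (Fin n) (AlgebraicClosure F) ((AlgebraicClosure F) ⊗[F] L)),
    ∀ x ∈ S, ∀ i j : Fin n, j < i →
      LinearMap.toMatrix b b (LinearMap.baseChange (AlgebraicClosure F) (m x)) i j = 0

end LeibnizDefs

/-! Let `p` be the projection onto `A` along `H`. As `A·L = 0`, the companion product is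
`[x, y] = xy - y(p x)`. It is antisymmetric because `xy - x(p y)` is the product in `H` of the
`H`-components of `x` and `y`. The projection satisfies `p(xy) = x(p y)` because `LA ⊆ A` and
`HH ⊆ H`. Given the Leibniz identity of the old product, the one of the new product reduces to
`z(p(xy) - x(p y)) = 0`. -/

section CompanionProduct

variable {R L : Type*} [CommRing R] [AddCommGroup L] [Module R L]
  (m : L →ₗ[R] L →ₗ[R] L)

/-- The companion product `[x, y] = xy - y(p x)` of a multiplication `m` on `L` with respect to a
projection `p` of `L`. It is defined for every endomorphism `p`; when `p` is the projection onto `A`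
along `H` and `A·L = 0`, it is the product `[a+h, b+k] = hb - ka + hk`. -/
def companionProduct (p : Module.End R L) : L →ₗ[R] L →ₗ[R] L :=
  m - m.flip ∘ₗ p

theorem companionProduct_apply (p : Module.End R L) (x y : L) :
    companionProduct m p x y = m x y - m y (p x) := rfl

variable {m}

theorem companionProduct_antisymm {p : Module.End R L} (hp : IsIdempotentElem p)
    (hker : ∀ h ∈ p.ker, ∀ k ∈ p.ker, m h k = -m k h) (hzero : ∀ x y, m (p x) y = 0) (x y : L) :
    companionProduct m p x y = -companionProduct m p y x := by
  have mem_ker (u : L) : u - p u ∈ p.ker := by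
    rw [LinearMap.mem_ker, map_sub, ← Module.End.mul_apply, hp.eq, sub_self]
  have mul_ker (u v : L) : m (u - p u) (v - p v) = m u v - m u (p v) := by
    rw [map_sub m, LinearMap.sub_apply, hzero, sub_zero, map_sub]
  have anticomm : m x y - m x (p y) = -(m y x - m y (p x)) := by
    rw [← mul_ker x y, ← mul_ker y x]
    exact hker _ (mem_ker x) _ (mem_ker y)
  rw [companionProduct_apply, companionProduct_apply]
  linear_combination (norm := module) anticomm

theorem companionProduct_leibniz (hm : ∀ x y z, m x (m y z) = m (m x y) z + m y (m x z))
    {p : Module.End R L} (hp : IsIdempotentElem p) (hequiv : ∀ x y, p (m x y) = m x (p y))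
    (hzero : ∀ x y, m (p x) y = 0) (x y z : L) :
    companionProduct m p x (companionProduct m p y z) =
      companionProduct m p (companionProduct m p x y) z +
        companionProduct m p y (companionProduct m p x z) := by
  have idem (u : L) : p (p u) = p u := DFunLike.congr_fun hp.eq u
  have mul_range_mul (u v w : L) : m (m u (p v)) w = 0 := by
    rw [← hequiv, hzero]
  simp only [companionProduct_apply, map_sub, LinearMap.sub_apply, hequiv, idem, mul_range_mul]
  rw [hm x y z, hm x z (p y), hm y z (p x)]
  abel

end CompanionProduct

section Complement

variable {R L : Type*} [CommRing R] [AddCommGroup L] [Module R L] {m : L →ₗ[R] L →ₗ[R] L}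
  {A H : Submodule R L}

theorem projection_mul_eq_mul_projection (hc : IsCompl A H) (hH : ∀ h ∈ H, ∀ k ∈ H, m h k ∈ H)
    (hA : ∀ x, ∀ a ∈ A, m x a ∈ A) (hAL : ∀ a ∈ A, ∀ x, m a x = 0) (x y : L) :
    A.projection H hc (m x y) = m x (A.projection H hc y) := by
  set p := A.projection H hc
  have mul_sub_mem : m x (y - p y) ∈ H := by
    have mul_eq : m x (y - p y) = m (x - p x) (y - p y) := by
      rw [map_sub m, LinearMap.sub_apply, hAL _ (projection_apply_mem hc x), sub_zero]
    rw [mul_eq]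
    exact hH _ (sub_projection_mem hc x) _ (sub_projection_mem hc y)
  calc p (m x y) = p (m x (p y)) + p (m x (y - p y)) := by
        rw [← map_add, ← map_add, add_sub_cancel]
    _ = m x (p y) := by
        rw [projection_apply_of_mem_left hc (hA x _ (projection_apply_mem hc y)),
          projection_apply_of_mem_right hc mul_sub_mem, add_zero]

theorem companionProduct_projection_add_add (hc : IsCompl A H) (hAL : ∀ a ∈ A, ∀ x, m a x = 0)
    {a h b k : L} (ha : a ∈ A) (hh : h ∈ H) (hb : b ∈ A) :
    companionProduct m (A.projection H hc) (a + h) (b + k) = m h b - m k a + m h k := by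
  rw [companionProduct_apply, map_add (A.projection H hc), projection_apply_of_mem_left hc ha,
    projection_apply_of_mem_right hc hh, add_zero, map_add m, map_add m, LinearMap.add_apply,
    LinearMap.add_apply, hAL a ha, hAL b hb, zero_add, zero_add, map_add]
  abel

theorem companion_lie_algebra_general (hm : ∀ x y z, m x (m y z) = m (m x y) z + m y (m x z))
    (hH : ∀ h ∈ H, ∀ k ∈ H, m h k ∈ H) (hHLie : ∀ h ∈ H, ∀ k ∈ H, m h k = -m k h)
    (hA : ∀ x, ∀ a ∈ A, m x a ∈ A) (hAL : ∀ a ∈ A, ∀ x, m a x = 0) (hc : IsCompl A H) :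
    ∃ m' : L →ₗ[R] L →ₗ[R] L,
      (∀ a ∈ A, ∀ h ∈ H, ∀ b ∈ A, ∀ k ∈ H, m' (a + h) (b + k) = m h b - m k a + m h k) ∧
      (∀ x y, m' x y = -m' y x) ∧
      ∀ x y z, m' x (m' y z) = m' (m' x y) z + m' y (m' x z) := by
  have hp := isIdempotentElem_projection hc
  have hequiv := projection_mul_eq_mul_projection hc hH hA hAL
  have hzero (x y : L) : m (A.projection H hc x) y = 0 := hAL _ (projection_apply_mem hc x) y
  have hker : ∀ h ∈ (A.projection H hc).ker, ∀ k ∈ (A.projection H hc).ker, m h k = -m k h := by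
    rwa [ker_projection]
  exact ⟨companionProduct m (A.projection H hc),
    fun _ ha _ hh _ hb _ _ => companionProduct_projection_add_add hc hAL ha hh hb,
    companionProduct_antisymm hp hker hzero, companionProduct_leibniz hm hp hequiv hzero⟩

end Complement

/-- Let `L` be a left Leibniz algebra over a field `F`, `H` a subalgebra
of `L` with antisymmetric multiplication (so `H` is a Lie algebra), and `A` an ideal of
`L` with `A·A = 0` and `A·L = 0`, such that `L = A ⊕ H` as vector spaces. Then the vector
space `A ⊕ H = L` equipped with the product `[a+h, b+k] = hb − ka + hk` is a Lie algebra
(the companion Lie algebra of `L`): such a bilinear product `m'` exists, is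
antisymmetric, and satisfies the (left) Leibniz identity (equivalently, the Jacobi
identity). -/
theorem companion_lie_algebra
    {F : Type*} [Field F] {L : Type*} [AddCommGroup L] [Module F L]
    [FiniteDimensional F L]
    (m : L →ₗ[F] L →ₗ[F] L) (hm : IsLeibniz m)
    (H : Submodule F L) (hH : IsSubalg m H)
    (hHLie : ∀ h ∈ H, ∀ k ∈ H, m h k = - m k h)
    (A : Submodule F L) (hA : IsIdeal m A)
    (hAA : ∀ a ∈ A, ∀ b ∈ A, m a b = 0)
    (hAL : ∀ a ∈ A, ∀ x : L, m a x = 0)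
    (hdisj : A ⊓ H = ⊥) (hsum : A ⊔ H = ⊤) :
    ∃ m' : L →ₗ[F] L →ₗ[F] L,
      (∀ a ∈ A, ∀ h ∈ H, ∀ b ∈ A, ∀ k ∈ H,
        m' (a + h) (b + k) = m h b - m k a + m h k) ∧
      (∀ x y : L, m' x y = - m' y x) ∧ IsLeibniz m' :=
  companion_lie_algebra_general hm hH hHLie (fun x a ha => (hA x a ha).1) hAL
    (IsCompl.of_eq hdisj hsum)
end

section
/- Let 𝓕 be a formation of solvable Leibniz algebras over a field F (a class of finite-dimensional solvable Leibniz algebras closed under epimorphic images and such that L/A ∈ 𝓕 and L/B ∈ 𝓕 imply L/(A∩B) ∈ 𝓕). Let L be a finite-dimensional solvable Leibniz algebra with φ(L) = 0 such that L ∉ 𝓕 but every proper subalgebra of L belongs to 𝓕, and suppose L is not a Lie algebra. Write L = A + H with A the unique minimal ideal and H a complementing subalgebra. Then A = Leib(L), A is self-centralizing in L (the centralizer of A in L equals A), and H ≅ L/A is a Lie algebra. -/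
/-!
Basic theory of (left) Leibniz algebras, formalized over an arbitrary field `F`.
A Leibniz algebra structure on an `F`-vector space `L` is given by a bilinear
multiplication `m : L →ₗ[F] L →ₗ[F] L` satisfying the left Leibniz identity.
-/

open Submodule Module

section Formation

variable {F : Type} [Field F]

/-- A bundled finite-dimensional Leibniz algebra over `F`. -/
structure LeibnizAlg (F : Type) [Field F] where
  carrier : Type
  [isAddCommGroup : AddCommGroup carrier]
  [isModule : Module F carrier]
  [isFin : FiniteDimensional F carrier]
  mul : carrier →ₗ[F] carrier →ₗ[F] carrier
  leibniz : IsLeibniz mul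

attribute [instance] LeibnizAlg.isAddCommGroup LeibnizAlg.isModule LeibnizAlg.isFin

/-- Bundle a Leibniz algebra structure. -/
def LeibnizAlg.of {L : Type} [AddCommGroup L] [Module F L] [FiniteDimensional F L]
    (m : L →ₗ[F] L →ₗ[F] L) (hm : IsLeibniz m) : LeibnizAlg F :=
  { carrier := L, mul := m, leibniz := hm }

/-- The multiplication of a subalgebra, as a bilinear map on the subspace. -/
def subMul {L : Type} [AddCommGroup L] [Module F L]
    (m : L →ₗ[F] L →ₗ[F] L) (S : Submodule F L) (hS : IsSubalg m S) :
    S →ₗ[F] S →ₗ[F] S :=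
  LinearMap.mk₂ F (fun x y => ⟨m x y, hS x x.2 y y.2⟩)
    (fun x x' y => by apply Subtype.ext; simp)
    (fun c x y => by apply Subtype.ext; simp)
    (fun x y y' => by apply Subtype.ext; simp)
    (fun c x y => by apply Subtype.ext; simp)

/-- A subalgebra of a Leibniz algebra, as a Leibniz algebra in its own right. -/
def subAlgOf {L : Type} [AddCommGroup L] [Module F L] [FiniteDimensional F L]
    (m : L →ₗ[F] L →ₗ[F] L) (hm : IsLeibniz m)
    (S : Submodule F L) (hS : IsSubalg m S) : LeibnizAlg F :=
  { carrier := S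
    mul := subMul m S hS
    leibniz := fun a b c => by
      apply Subtype.ext
      simpa [subMul] using hm a b c }

/-- `QuotIn 𝓕 M A` says that the quotient of `M` by the ideal `A` belongs to the class
`𝓕`; phrased via surjective homomorphisms with kernel `A`, to avoid constructing the
quotient algebra. -/
def QuotIn (𝓕 : Set (LeibnizAlg F)) (M : LeibnizAlg F)
    (A : Submodule F M.carrier) : Prop :=
  ∃ N ∈ 𝓕, ∃ f : M.carrier →ₗ[F] N.carrier,
    (∀ x y, f (M.mul x y) = N.mul (f x) (f y)) ∧
    Function.Surjective f ∧ LinearMap.ker f = A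

/-- A formation of solvable Leibniz algebras: a class of finite-dimensional solvable
Leibniz algebras closed under epimorphic images and such that whenever `A`, `B` are
ideals of a Leibniz algebra `M` with `M/A ∈ 𝓕` and `M/B ∈ 𝓕`, then `M/(A ∩ B) ∈ 𝓕`. -/
def IsFormation (𝓕 : Set (LeibnizAlg F)) : Prop :=
  (∀ M ∈ 𝓕, IsSolvableAlg M.mul) ∧
  (∀ M ∈ 𝓕, ∀ N : LeibnizAlg F,
    (∃ f : M.carrier →ₗ[F] N.carrier,
      (∀ x y, f (M.mul x y) = N.mul (f x) (f y)) ∧ Function.Surjective f) → N ∈ 𝓕) ∧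
  (∀ (M : LeibnizAlg F) (A B : Submodule F M.carrier),
    IsIdeal M.mul A → IsIdeal M.mul B →
    QuotIn 𝓕 M A → QuotIn 𝓕 M B → QuotIn 𝓕 M (A ⊓ B))

end Formation

/-! Let `C` be the centralizer of the least nonzero ideal `A`. Since `L = A + H` and `A` acts
trivially on `C`, the intersection `C ∩ H` is again an ideal of `L`; it does not contain `A`, so
it vanishes, and hence `C = A` by the modular law as soon as `A ≤ C`. When `L` is not a Lie algebra,
`Leib(L)` is a nonzero ideal, so `A ≤ Leib(L)`; as `Leib(L)` annihilates `L` from the left, this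
gives `A ≤ Leib(L) ≤ C = A`. Finally the squares of elements of `H` lie in `Leib(L) ∩ H = 0`. -/

section Leibniz

variable {F : Type*} [Field F] {L : Type*} [AddCommGroup L] [Module F L]
variable {m : L →ₗ[F] L →ₗ[F] L} {A H S : Submodule F L}

theorem mul_self_mem_leibIdeal (m : L →ₗ[F] L →ₗ[F] L) (x : L) : m x x ∈ leibIdeal m :=
  subset_span ⟨x, rfl⟩

theorem mul_add_mul_swap_mem_leibIdeal (m : L →ₗ[F] L →ₗ[F] L) (x y : L) :
    m x y + m y x ∈ leibIdeal m := by
  have polarization : m x y + m y x = m (x + y) (x + y) - m x x - m y y := by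
    simp only [map_add, LinearMap.add_apply]
    abel
  rw [polarization]
  exact sub_mem (sub_mem (mul_self_mem_leibIdeal m _) (mul_self_mem_leibIdeal m _))
    (mul_self_mem_leibIdeal m _)

theorem IsLeibniz.leibIdeal_le_ker (hm : IsLeibniz m) : leibIdeal m ≤ LinearMap.ker m := by
  refine span_le.2 ?_
  rintro _ ⟨x, rfl⟩
  ext y
  simpa using hm x x y

theorem IsLeibniz.mul_eq_zero_of_mem_leibIdeal (hm : IsLeibniz m) {x : L}
    (hx : x ∈ leibIdeal m) (y : L) : m x y = 0 :=
  LinearMap.congr_fun (hm.leibIdeal_le_ker hx) y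

theorem IsLeibniz.isIdeal_leibIdeal (hm : IsLeibniz m) : IsIdeal m (leibIdeal m) := by
  intro y x hx
  constructor
  · suffices leibIdeal m ≤ (leibIdeal m).comap (m y) from this hx
    refine span_le.2 ?_
    rintro _ ⟨a, rfl⟩
    simpa only [SetLike.mem_coe, mem_comap, hm y a a]
      using mul_add_mul_swap_mem_leibIdeal m (m y a) a
  · rw [hm.mul_eq_zero_of_mem_leibIdeal hx]
    exact zero_mem _

theorem IsSubalg.mul_eq_neg_mul_swap_of_disjoint_leibIdeal (hS : IsSubalg m S)
    (hdisj : Disjoint (leibIdeal m) S) : ∀ x ∈ S, ∀ y ∈ S, m x y = -m y x := fun x hx y hy =>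
  eq_neg_of_add_eq_zero_left <| disjoint_def.1 hdisj _ (mul_add_mul_swap_mem_leibIdeal m x y)
    (add_mem (hS x hx y hy) (hS y hy x hx))

theorem isLie_of_leibIdeal_eq_bot (h : leibIdeal m = ⊥) : IsLie m := by
  have htop : IsSubalg m ⊤ := fun _ _ _ _ => mem_top
  intro x y
  exact htop.mul_eq_neg_mul_swap_of_disjoint_leibIdeal (h ▸ disjoint_bot_left) x mem_top y mem_top

/-- The centralizer `{x | xA = Ax = 0}` of a subspace `A`, encoded as a subspace so that it can
be compared with ideals and intersected with complements of `A`. -/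
def leibCentralizer (m : L →ₗ[F] L →ₗ[F] L) (A : Submodule F L) : Submodule F L where
  carrier := {x | ∀ a ∈ A, m x a = 0 ∧ m a x = 0}
  add_mem' hx hy a ha := by simp [hx a ha, hy a ha]
  zero_mem' a _ := by simp
  smul_mem' c x hx a ha := by simp [hx a ha]

theorem IsLeibniz.isIdeal_leibCentralizer (hm : IsLeibniz m) (hA : IsIdeal m A) :
    IsIdeal m (leibCentralizer m A) := by
  intro y x hx
  refine ⟨fun a ha => ⟨?_, ?_⟩, fun a ha => ⟨?_, ?_⟩⟩
  · simpa [hx a ha, hx _ (hA y a ha).1] using (hm y x a).symm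
  · simpa [hx a ha, hx _ (hA y a ha).2] using hm a y x
  · simpa [hx a ha, hx _ (hA y a ha).1] using (hm x y a).symm
  · simpa [hx a ha, hx _ (hA y a ha).2] using hm a x y

theorem IsLeibniz.leibIdeal_le_leibCentralizer (hm : IsLeibniz m) (hA : A ≤ leibIdeal m) :
    leibIdeal m ≤ leibCentralizer m A := fun x hx a ha =>
  ⟨hm.mul_eq_zero_of_mem_leibIdeal hx a, hm.mul_eq_zero_of_mem_leibIdeal (hA ha) x⟩

theorem IsLeibniz.isIdeal_leibCentralizer_inf (hm : IsLeibniz m) (hA : IsIdeal m A)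
    (hH : IsSubalg m H) (hcodisj : Codisjoint A H) : IsIdeal m (leibCentralizer m A ⊓ H) := by
  rintro x c ⟨hcA, hcH⟩
  obtain ⟨a, h, ha, hh, rfl⟩ := codisjoint_iff_exists_add_eq.1 hcodisj x
  have hC := hm.isIdeal_leibCentralizer hA h c hcA
  simp only [map_add, LinearMap.add_apply, hcA a ha, zero_add]
  exact ⟨⟨hC.1, hH h hh c hcH⟩, ⟨hC.2, hH c hcH h hh⟩⟩

theorem IsLeibniz.leibCentralizer_eq_of_isLeast (hm : IsLeibniz m)
    (hA : IsLeast {I | IsIdeal m I ∧ I ≠ ⊥} A) (hH : IsSubalg m H) (hcompl : IsCompl A H)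
    (hle : A ≤ leibCentralizer m A) : leibCentralizer m A = A := by
  have hinf : leibCentralizer m A ⊓ H = ⊥ := by
    by_contra hne
    have hAH : A ≤ H :=
      (hA.2 ⟨hm.isIdeal_leibCentralizer_inf hA.1.1 hH hcompl.codisjoint, hne⟩).trans inf_le_right
    exact hA.1.2 (hcompl.disjoint.eq_bot_of_le hAH)
  exact (eq_of_le_of_inf_le_of_le_sup hle (hinf.trans_le bot_le)
    (le_top.trans_eq hcompl.sup_eq_top.symm)).symm

theorem isMinIdeal_of_minimal (hA : Minimal (fun I => IsIdeal m I ∧ I ≠ ⊥) A) :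
    IsMinIdeal m A :=
  ⟨hA.prop.1, hA.prop.2, fun _ hJ hJA =>
    or_iff_not_imp_left.2 fun hne => hA.eq_of_le ⟨hJ, hne⟩ hJA⟩

theorem IsMinIdeal.isLeast_of_unique [FiniteDimensional F L] (hA : IsMinIdeal m A)
    (huniq : ∀ A', IsMinIdeal m A' → A' = A) : IsLeast {I | IsIdeal m I ∧ I ≠ ⊥} A := by
  refine ⟨⟨hA.1, hA.2.1⟩, fun I hI => ?_⟩
  obtain ⟨A', hle, hmin⟩ :=
    exists_minimal_le_of_wellFoundedLT (fun I => IsIdeal m I ∧ I ≠ ⊥) I hI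
  exact huniq A' (isMinIdeal_of_minimal hmin) ▸ hle

theorem minimal_ideal_is_leib_and_complement_is_lie_general (hm : IsLeibniz m)
    (hnotLie : ¬ IsLie m) (hA : IsLeast {I | IsIdeal m I ∧ I ≠ ⊥} A)
    (hH : IsSubalg m H) (hcompl : IsCompl A H) :
    A = leibIdeal m ∧
    (∀ x : L, (∀ a ∈ A, m x a = 0 ∧ m a x = 0) ↔ x ∈ A) ∧
    (∀ h ∈ H, ∀ k ∈ H, m h k = - m k h) := by
  have hAL : A ≤ leibIdeal m := hA.2 ⟨hm.isIdeal_leibIdeal, mt isLie_of_leibIdeal_eq_bot hnotLie⟩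
  have hLC : leibIdeal m ≤ leibCentralizer m A := hm.leibIdeal_le_leibCentralizer hAL
  have hCA : leibCentralizer m A = A :=
    hm.leibCentralizer_eq_of_isLeast hA hH hcompl (hAL.trans hLC)
  have hLA : A = leibIdeal m := hAL.antisymm (hLC.trans_eq hCA)
  exact ⟨hLA, SetLike.ext_iff.1 hCA,
    hH.mul_eq_neg_mul_swap_of_disjoint_leibIdeal (hLA ▸ hcompl.disjoint)⟩

end Leibniz

/-- Let `𝓕` be a formation of solvable Leibniz algebras over `F`. Let
`L` be a finite-dimensional solvable Leibniz algebra with `φ(L) = 0` such that `L ∉ 𝓕`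
but every proper subalgebra of `L` belongs to `𝓕`, and suppose `L` is not a Lie algebra.
Write `L = A + H` with `A` the unique minimal ideal and `H` a complementing subalgebra.
Then `A = Leib(L)`, `A` is self-centralizing in `L` (the centralizer
`{x : xA = Ax = 0}` of `A` in `L` equals `A`), and `H ≅ L/A` is a Lie algebra. -/
theorem minimal_ideal_is_leib_and_complement_is_lie
    {F : Type} [Field F] (𝓕 : Set (LeibnizAlg F)) (h𝓕 : IsFormation 𝓕)
    {L : Type} [AddCommGroup L] [Module F L] [FiniteDimensional F L]
    (m : L →ₗ[F] L →ₗ[F] L) (hm : IsLeibniz m)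
    (hsolv : IsSolvableAlg m)
    (hphi : frattiniIdeal m = ⊥)
    (hnotin : LeibnizAlg.of m hm ∉ 𝓕)
    (hproper : ∀ (S : Submodule F L) (hS : IsSubalg m S), S ≠ ⊤ →
      subAlgOf m hm S hS ∈ 𝓕)
    (hnotLie : ¬ IsLie m)
    (A H : Submodule F L)
    (hmin : IsMinIdeal m A) (huniq : ∀ A', IsMinIdeal m A' → A' = A)
    (hH : IsSubalg m H) (hdisj : A ⊓ H = ⊥) (hsum : A ⊔ H = ⊤) :
    A = leibIdeal m ∧
    (∀ x : L, (∀ a ∈ A, m x a = 0 ∧ m a x = 0) ↔ x ∈ A) ∧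
    (∀ h ∈ H, ∀ k ∈ H, m h k = - m k h) := by
  exact minimal_ideal_is_leib_and_complement_is_lie_general hm hnotLie
    (hmin.isLeast_of_unique huniq) hH ⟨disjoint_iff.2 hdisj, codisjoint_iff.2 hsum⟩
end

section
/- Let L be a finite-dimensional solvable Leibniz algebra over a field F that is minimally non-strongly-solvable (L is not strongly solvable but every proper subalgebra of L is strongly solvable). Then L is two-generated. -/
/-!
Basic theory of (left) Leibniz algebras, formalized over an arbitrary field `F`.
A Leibniz algebra structure on an `F`-vector space `L` is given by a bilinear
multiplication `m : L →ₗ[F] L →ₗ[F] L` satisfying the left Leibniz identity.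
-/

open Submodule Module

/-!
If `L` is not strongly solvable, some product `xy` must fail to act nilpotently on one of its
factors `x`, `y`, and then `x` and `y` generate a subalgebra that is not strongly solvable.

To see this, suppose every `xy` acts nilpotently on `x` and `y`, and argue by induction on the
dimension. Let `A` be a minimal ideal; it is abelian and irreducible as a left module, and by
induction some term of the lower central series of `N = L²` lies in `A`, so acts as `0` on `A`.
If `N · A ≠ 0`, the last term `Z` of that series acting nontrivially on `A` acts by commuting
operators. So the Fitting null component on `A` of each `z ∈ Z` is a submodule, and `z` is
injective or nilpotent on `A`. For a product `z = xy` injectivity is impossible: by a dimension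
count `z = (x + a)(y + b)` for some `(a, b) ≠ 0` in `A × A`, and `z` acts nilpotently on `x`, `y`,
`x + a`, `y + b`, hence on `a` and `b`. Thus the products spanning `Z` are commuting nilpotent
operators on `A`; their common kernel is a nonzero submodule, and therefore all of `A`, a
contradiction. Hence `N · A = 0`, and `N` is nilpotent.
-/

attribute [local instance] LieRing.ofAssociativeRing

section Endomorphisms

variable {R V W : Type*} [CommRing R] [AddCommGroup V] [Module R V] [AddCommGroup W] [Module R W]

lemma mem_maxGenEigenspace_zero {f : End R V} {v : V} :
    v ∈ f.maxGenEigenspace 0 ↔ ∃ n : ℕ, (f ^ n) v = 0 := by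
  simp only [End.mem_maxGenEigenspace, zero_smul, sub_zero]

lemma map_mem_maxGenEigenspace_zero {f : End R V} {g : End R W} {φ : V →ₗ[R] W}
    (hφ : g ∘ₗ φ = φ ∘ₗ f) {v : V} (hv : v ∈ f.maxGenEigenspace 0) :
    φ v ∈ g.maxGenEigenspace 0 := by
  obtain ⟨n, hn⟩ := mem_maxGenEigenspace_zero.1 hv
  refine mem_maxGenEigenspace_zero.2 ⟨n, ?_⟩
  rw [← LinearMap.comp_apply, End.commute_pow_left_of_commute hφ n, LinearMap.comp_apply, hn,
    map_zero]

lemma mapsTo_maxGenEigenspace_zero_of_commute_lie {f g : End R V} (h : Commute f ⁅f, g⁆) :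
    Set.MapsTo g (f.maxGenEigenspace 0) (f.maxGenEigenspace 0) := by
  intro v hv
  have hg : g ∈ (LieModule.toEnd R (End R V) (End R V) f).maxGenEigenspace 0 :=
    mem_maxGenEigenspace_zero.2 ⟨2, by
      simpa only [pow_two, End.mul_apply, LieModule.toEnd_apply_apply] using h.lie_eq⟩
  have hlie : ⁅g, v⁆ ∈ (LieModule.toEnd R (End R V) V f).maxGenEigenspace (0 + 0) :=
    LieModule.lie_mem_maxGenEigenspace_toEnd hg hv
  rwa [add_zero] at hlie

/-- Otherwise `f` would be injective on `W`, and so would its powers. -/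
lemma inf_ker_ne_bot_of_le_maxGenEigenspace_zero {f : End R V} {W : Submodule R V} (hW : W ≠ ⊥)
    (hfW : Set.MapsTo f W W) (hnil : W ≤ f.maxGenEigenspace 0) : W ⊓ LinearMap.ker f ≠ ⊥ := by
  intro hbot
  obtain ⟨w, hw, hw0⟩ := W.exists_mem_ne_zero_of_ne_bot hW
  obtain ⟨n, hn⟩ := mem_maxGenEigenspace_zero.1 (hnil hw)
  have hinj : Set.InjOn f W := LinearMap.injOn_of_disjoint_ker le_rfl (disjoint_iff.2 hbot)
  refine hw0 (hinj.iterate hfW n hw W.zero_mem ?_)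
  rw [← End.pow_apply, ← End.pow_apply, hn, map_zero]

lemma exists_ne_zero_forall_apply_eq_zero_of_commute [IsArtinian R V] [Nontrivial V]
    {T : Set (End R V)} (hcomm : ∀ f ∈ T, ∀ g ∈ T, Commute f g)
    (hnil : ∀ f ∈ T, f.maxGenEigenspace 0 = ⊤) : ∃ v ≠ 0, ∀ f ∈ T, f v = 0 := by
  obtain ⟨W, ⟨hW0, hTW⟩, hmin⟩ := IsArtinian.set_has_minimal
    {W : Submodule R V | W ≠ ⊥ ∧ ∀ f ∈ T, Set.MapsTo f W W}
    ⟨⊤, top_ne_bot, fun f _ ↦ Set.mapsTo_univ f _⟩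
  have hker : ∀ f ∈ T, W ≤ LinearMap.ker f := by
    intro f hf
    have hstable : ∀ g ∈ T, Set.MapsTo g (W ⊓ LinearMap.ker f : Submodule R V)
        (W ⊓ LinearMap.ker f : Submodule R V) := fun g hg w hw ↦
      ⟨hTW g hg hw.1, by
        rw [SetLike.mem_coe, LinearMap.mem_ker, ← End.mul_apply, (hcomm f hf g hg).eq,
          End.mul_apply, LinearMap.mem_ker.1 hw.2, map_zero]⟩
    have hne : W ⊓ LinearMap.ker f ≠ ⊥ :=
      inf_ker_ne_bot_of_le_maxGenEigenspace_zero hW0 (hTW f hf) (hnil f hf ▸ le_top)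
    exact inf_eq_left.1 (inf_le_left.eq_of_not_lt (hmin _ ⟨hne, hstable⟩))
  obtain ⟨v, hv, hv0⟩ := W.exists_mem_ne_zero_of_ne_bot hW0
  exact ⟨v, hv0, fun f hf ↦ hker f hf hv⟩

end Endomorphisms

section Ideals

variable {F : Type*} [Field F] {L : Type*} [AddCommGroup L] [Module F L]
variable {m : L →ₗ[F] L →ₗ[F] L}

lemma IsLeibniz.apply_mul (hm : IsLeibniz m) (x y : L) :
    m (m x y) = ⁅(m x : End F L), m y⁆ := by
  ext z
  rw [Ring.lie_def, LinearMap.sub_apply, End.mul_apply, End.mul_apply, hm x y z,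
    add_sub_cancel_right]

/-- A left ideal of `(L, m)`: a subspace `I` with `L·I ⊆ I`, i.e. a submodule of the left regular
representation. -/
def IsLeftIdeal (m : L →ₗ[F] L →ₗ[F] L) (I : Submodule F L) : Prop :=
  ∀ x, ∀ y ∈ I, m x y ∈ I

lemma IsIdeal.isLeftIdeal {I : Submodule F L} (hI : IsIdeal m I) : IsLeftIdeal m I :=
  fun x y hy ↦ (hI x y hy).1

protected lemma IsLeftIdeal.mprod (hm : IsLeibniz m) {P Q : Submodule F L} (hP : IsLeftIdeal m P)
    (hQ : IsLeftIdeal m Q) : IsLeftIdeal m (mprod m P Q) := by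
  intro x
  suffices mprod m P Q ≤ (mprod m P Q).comap (m x) from this
  refine map₂_le.2 fun p hp q hq ↦ ?_
  rw [mem_comap, hm]
  exact add_mem (apply_mem_map₂ _ (hP x p hp) hq) (apply_mem_map₂ _ hp (hQ x q hq))

protected lemma IsLeftIdeal.lcSeries (hm : IsLeibniz m) {N : Submodule F L} (hN : IsLeftIdeal m N)
    (k : ℕ) : IsLeftIdeal m (lcSeries m N k) := by
  induction k with
  | zero => exact hN
  | succ k ih => exact hN.mprod hm ih

lemma isLeftIdeal_mprod_top (m : L →ₗ[F] L →ₗ[F] L) : IsLeftIdeal m (mprod m ⊤ ⊤) :=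
  fun _ _ _ ↦ apply_mem_map₂ m mem_top mem_top

lemma lcSeries_mprod_top_eq_mprod (m : L →ₗ[F] L →ₗ[F] L) (k : ℕ) :
    ∃ P Q, lcSeries m (mprod m ⊤ ⊤) k = mprod m P Q := by
  cases k with
  | zero => exact ⟨⊤, ⊤, rfl⟩
  | succ k => exact ⟨_, _, rfl⟩

lemma lcSeries_mprod_top_le (m : L →ₗ[F] L →ₗ[F] L) (k : ℕ) :
    lcSeries m (mprod m ⊤ ⊤) k ≤ mprod m ⊤ ⊤ := by
  obtain ⟨P, Q, h⟩ := lcSeries_mprod_top_eq_mprod m k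
  exact h ▸ map₂_le_map₂ le_top le_top

lemma IsLeibniz.add_mul_swap_mem_ker (hm : IsLeibniz m) (x y : L) :
    m x y + m y x ∈ LinearMap.ker m := by
  rw [LinearMap.mem_ker, map_add, hm.apply_mul, hm.apply_mul, ← lie_skew, neg_add_cancel]

lemma IsIdeal.inf_ker (hm : IsLeibniz m) {I : Submodule F L} (hI : IsIdeal m I) :
    IsIdeal m (I ⊓ LinearMap.ker m) := by
  rintro x y ⟨hyI, hy⟩
  rw [SetLike.mem_coe, LinearMap.mem_ker] at hy
  refine ⟨⟨hI.isLeftIdeal x y hyI, ?_⟩, ?_⟩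
  · rw [SetLike.mem_coe, LinearMap.mem_ker, hm.apply_mul, hy, lie_zero]
  · rw [hy]
    exact zero_mem _

/-- Applying minimality of `A` to its left annihilator `A ⊓ ker m` shows that right
multiplication on `A` is either zero or the negative of left multiplication. -/
lemma IsMinIdeal.eq_bot_or_eq_of_isLeftIdeal (hm : IsLeibniz m) {A B : Submodule F L}
    (hA : IsMinIdeal m A) (hB : IsLeftIdeal m B) (hBA : B ≤ A) : B = ⊥ ∨ B = A := by
  obtain ⟨hI, -, hmin⟩ := hA
  refine hmin B (fun x y hy ↦ ⟨hB x y hy, ?_⟩) hBA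
  rcases hmin _ (hI.inf_ker hm) inf_le_left with hbot | htop
  · have hswap : m x y + m y x ∈ A ⊓ LinearMap.ker m :=
      ⟨add_mem (hI x y (hBA hy)).1 (hI x y (hBA hy)).2, hm.add_mul_swap_mem_ker x y⟩
    rw [hbot, mem_bot] at hswap
    exact eq_neg_of_add_eq_zero_right hswap ▸ neg_mem (hB x y hy)
  · have hy0 : m y = 0 := inf_eq_left.1 htop (hBA hy)
    rw [hy0]
    exact zero_mem B

lemma IsMinIdeal.mprod_self_eq_bot (hm : IsLeibniz m) (hsolv : IsSolvableAlg m)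
    {A : Submodule F L} (hA : IsMinIdeal m A) : mprod m A A = ⊥ := by
  have hI := hA.1.isLeftIdeal
  refine (hA.eq_bot_or_eq_of_isLeftIdeal hm (hI.mprod hm hI)
    (map₂_le.2 fun x _ y hy ↦ hI x y hy)).resolve_right fun hperfect ↦ hA.2.1 ?_
  have hle : ∀ n, A ≤ derSeries m ⊤ n := by
    intro n
    induction n with
    | zero => exact le_top
    | succ n ih => exact hperfect ▸ map₂_le_map₂ ih ih
  obtain ⟨n, hn⟩ := hsolv
  exact le_bot_iff.1 (hn ▸ hle n)

lemma exists_isMinIdeal [IsArtinian F L] [Nontrivial L] (m : L →ₗ[F] L →ₗ[F] L) :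
    ∃ A, IsMinIdeal m A := by
  obtain ⟨A, ⟨hA, hA0⟩, hmin⟩ := IsArtinian.set_has_minimal {I | IsIdeal m I ∧ I ≠ ⊥}
    ⟨⊤, fun _ _ _ ↦ ⟨mem_top, mem_top⟩, top_ne_bot⟩
  exact ⟨A, hA, hA0, fun J hJ hJA ↦
    or_iff_not_imp_left.2 fun hJ0 ↦ hJA.eq_of_not_lt (hmin J ⟨hJ, hJ0⟩)⟩

end Ideals

section Representations

variable {F : Type*} [Field F] {L : Type*} [AddCommGroup L] [Module F L]
variable {V : Type*} [AddCommGroup V] [Module F V]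
variable {m : L →ₗ[F] L →ₗ[F] L} {ρ : L →ₗ[F] End F V}

/-- `ρ` is an irreducible left representation of the Leibniz algebra `(L, m)` on `V`. Only the
left action is recorded, since a minimal ideal is already irreducible under left
multiplications. -/
structure IsIrreducibleRep (m : L →ₗ[F] L →ₗ[F] L) (ρ : L →ₗ[F] End F V) : Prop where
  map_mul : ∀ x y, ρ (m x y) = ⁅ρ x, ρ y⁆
  nontrivial : Nontrivial V
  eq_bot_or_eq_top : ∀ W : Submodule F V, (∀ x, Set.MapsTo (ρ x) W W) → W = ⊥ ∨ W = ⊤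

namespace IsIrreducibleRep

lemma maxGenEigenspace_zero_eq_bot_or_eq_top (hρ : IsIrreducibleRep m ρ) {Z : Submodule F L}
    (hZ : IsLeftIdeal m Z) (hcomm : ∀ w ∈ Z, ∀ z ∈ Z, Commute (ρ w) (ρ z)) {z : L} (hz : z ∈ Z) :
    (ρ z).maxGenEigenspace 0 = ⊥ ∨ (ρ z).maxGenEigenspace 0 = ⊤ := by
  refine hρ.eq_bot_or_eq_top _ fun x ↦ mapsTo_maxGenEigenspace_zero_of_commute_lie ?_
  rw [← lie_skew, ← hρ.map_mul]
  exact (hcomm z hz _ (hZ x z hz)).neg_right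

lemma eq_zero_of_apply_eq_zero (hρ : IsIrreducibleRep m ρ) {Z : Submodule F L}
    (hZ : IsLeftIdeal m Z) {v : V} (hv0 : v ≠ 0) (hv : ∀ z ∈ Z, ρ z v = 0) :
    ∀ z ∈ Z, ρ z = 0 := by
  let K : Submodule F V := ⨅ z ∈ Z, LinearMap.ker (ρ z)
  have mem_K {u : V} : u ∈ K ↔ ∀ z ∈ Z, ρ z u = 0 := by
    simp only [K, mem_iInf, LinearMap.mem_ker]
  have hstable : ∀ x, Set.MapsTo (ρ x) K K := by
    intro x u hu
    rw [SetLike.mem_coe, mem_K] at hu ⊢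
    intro z hz
    have hxz : ρ (m x z) u = ρ x (ρ z u) - ρ z (ρ x u) := by
      rw [hρ.map_mul, Ring.lie_def, LinearMap.sub_apply, End.mul_apply, End.mul_apply]
    rwa [hu _ (hZ x z hz), hu z hz, map_zero, zero_sub, eq_comm, neg_eq_zero] at hxz
  have hK : K = ⊤ := (hρ.eq_bot_or_eq_top K hstable).resolve_left
    ((Submodule.ne_bot_iff K).2 ⟨v, mem_K.2 hv, hv0⟩)
  intro z hz
  ext u
  exact mem_K.1 (hK ▸ mem_top) z hz

lemma eq_zero_of_mem_mprod [FiniteDimensional F V] (hρ : IsIrreducibleRep m ρ)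
    {P Q : Submodule F L} (hleft : IsLeftIdeal m (mprod m P Q))
    (hcomm : ∀ w ∈ mprod m P Q, ∀ z ∈ mprod m P Q, Commute (ρ w) (ρ z))
    (hsing : ∀ x ∈ P, ∀ y ∈ Q, (ρ (m x y)).maxGenEigenspace 0 ≠ ⊥) :
    ∀ z ∈ mprod m P Q, ρ z = 0 := by
  let products : Set (End F V) := {f | ∃ x ∈ P, ∃ y ∈ Q, ρ (m x y) = f}
  have hcomm' : ∀ f ∈ products, ∀ g ∈ products, Commute f g := by
    rintro _ ⟨x, hx, y, hy, rfl⟩ _ ⟨x', hx', y', hy', rfl⟩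
    exact hcomm _ (apply_mem_map₂ m hx hy) _ (apply_mem_map₂ m hx' hy')
  have hnil : ∀ f ∈ products, f.maxGenEigenspace 0 = ⊤ := by
    rintro _ ⟨x, hx, y, hy, rfl⟩
    exact (hρ.maxGenEigenspace_zero_eq_bot_or_eq_top hleft hcomm
      (apply_mem_map₂ m hx hy)).resolve_left (hsing x hx y hy)
  have := hρ.nontrivial
  obtain ⟨v, hv0, hv⟩ := exists_ne_zero_forall_apply_eq_zero_of_commute hcomm' hnil
  have hker : mprod m P Q ≤ LinearMap.ker (ρ.flip v) :=
    map₂_le.2 fun x hx y hy ↦ hv _ ⟨x, hx, y, hy, rfl⟩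
  exact hρ.eq_zero_of_apply_eq_zero hleft hv0 hker

lemma eq_zero_of_mem_mprod_top [FiniteDimensional F V] (hm : IsLeibniz m)
    (hρ : IsIrreducibleRep m ρ) (hsing : ∀ x y, (ρ (m x y)).maxGenEigenspace 0 ≠ ⊥) {k : ℕ}
    (hk : ∀ z ∈ lcSeries m (mprod m ⊤ ⊤) k, ρ z = 0) : ∀ z ∈ mprod m ⊤ ⊤, ρ z = 0 := by
  induction k with
  | zero => exact hk
  | succ k ih =>
    refine ih ?_
    have hleft := (isLeftIdeal_mprod_top m).lcSeries hm k
    have hcomm : ∀ w ∈ lcSeries m (mprod m ⊤ ⊤) k, ∀ z ∈ lcSeries m (mprod m ⊤ ⊤) k,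
        Commute (ρ w) (ρ z) := fun w hw z hz ↦ commute_iff_lie_eq.2 <| by
      rw [← hρ.map_mul]
      exact hk _ (apply_mem_map₂ m (lcSeries_mprod_top_le m k hw) hz)
    obtain ⟨P, Q, hPQ⟩ := lcSeries_mprod_top_eq_mprod m k
    rw [hPQ] at hleft hcomm ⊢
    exact hρ.eq_zero_of_mem_mprod hleft hcomm fun x _ y _ ↦ hsing x y

end IsIrreducibleRep

/-- The representation of `L` by left multiplications on a left ideal `A`. -/
def IsLeftIdeal.toEnd {A : Submodule F L} (hA : IsLeftIdeal m A) : L →ₗ[F] End F A where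
  toFun x := (m x).restrict (hA x)
  map_add' _ _ := by ext; simp
  map_smul' _ _ := by ext; simp

lemma IsLeftIdeal.toEnd_eq_zero_iff {A : Submodule F L} (hA : IsLeftIdeal m A) {x : L} :
    hA.toEnd x = 0 ↔ ∀ a ∈ A, m x a = 0 := by
  simp [LinearMap.ext_iff, IsLeftIdeal.toEnd, Subtype.ext_iff]

lemma IsMinIdeal.isIrreducibleRep_toEnd (hm : IsLeibniz m) {A : Submodule F L}
    (hA : IsMinIdeal m A) : IsIrreducibleRep m hA.1.isLeftIdeal.toEnd where
  map_mul x y := by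
    ext a
    exact LinearMap.congr_fun (hm.apply_mul x y) a
  nontrivial := nontrivial_iff_ne_bot.2 hA.2.1
  eq_bot_or_eq_top W hW := by
    have hleft : IsLeftIdeal m (W.map A.subtype) := by
      rintro x _ ⟨a, ha, rfl⟩
      exact mem_map_of_mem (hW x ha)
    refine (hA.eq_bot_or_eq_of_isLeftIdeal hm hleft (map_subtype_le A W)).imp (fun h ↦ ?_)
      fun h ↦ ?_
    · exact map_injective_of_injective A.injective_subtype (h.trans (Submodule.map_bot _).symm)
    · exact map_injective_of_injective A.injective_subtype (h.trans (map_subtype_top A).symm)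

end Representations

section Homomorphisms

variable {F : Type*} [Field F] {L L' : Type*} [AddCommGroup L] [Module F L]
variable [AddCommGroup L'] [Module F L']
variable {m : L →ₗ[F] L →ₗ[F] L} {m' : L' →ₗ[F] L' →ₗ[F] L'} {φ : L →ₗ[F] L'}

lemma map_mprod (hφ : ∀ x y, φ (m x y) = m' (φ x) (φ y)) (P Q : Submodule F L) :
    (mprod m P Q).map φ = mprod m' (P.map φ) (Q.map φ) := by
  have hcompat : m.compr₂ φ = m'.compl₁₂ φ φ := LinearMap.ext₂ hφ
  rw [map_map₂, hcompat, ← map₂_map_map]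

lemma map_derSeries (hφ : ∀ x y, φ (m x y) = m' (φ x) (φ y)) (S : Submodule F L) (n : ℕ) :
    (derSeries m S n).map φ = derSeries m' (S.map φ) n := by
  induction n with
  | zero => rfl
  | succ n ih => rw [derSeries, map_mprod hφ, ih, derSeries]

lemma map_lcSeries (hφ : ∀ x y, φ (m x y) = m' (φ x) (φ y)) (N : Submodule F L) (k : ℕ) :
    (lcSeries m N k).map φ = lcSeries m' (N.map φ) k := by
  induction k with
  | zero => rfl
  | succ k ih => rw [lcSeries, map_mprod hφ, ih, lcSeries]

lemma IsLeibniz.of_surjective (hφ : ∀ x y, φ (m x y) = m' (φ x) (φ y))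
    (hsurj : Function.Surjective φ) (hm : IsLeibniz m) : IsLeibniz m' := by
  refine hsurj.forall₃.2 fun a b c ↦ ?_
  simp only [← hφ, ← map_add, hm a b c]

lemma IsSolvableSub.map (hφ : ∀ x y, φ (m x y) = m' (φ x) (φ y)) {S : Submodule F L}
    (hS : IsSolvableSub m S) : IsSolvableSub m' (S.map φ) := by
  obtain ⟨n, hn⟩ := hS
  exact ⟨n, by rw [← map_derSeries hφ, hn, Submodule.map_bot]⟩

/-- The multiplication induced on the quotient of `L` by an ideal. -/
def IsIdeal.quotMul {I : Submodule F L} (hI : IsIdeal m I) :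
    (L ⧸ I) →ₗ[F] (L ⧸ I) →ₗ[F] (L ⧸ I) :=
  I.liftQ
    { toFun x := I.mapQ I (m x) fun y hy ↦ (hI x y hy).1
      map_add' _ _ := by ext; simp
      map_smul' _ _ := by ext; simp }
    fun x hx ↦ LinearMap.mem_ker.2 <| by
      ext y
      simpa using (hI y x hx).2

lemma IsIdeal.mkQ_mul {I : Submodule F L} (hI : IsIdeal m I) (x y : L) :
    I.mkQ (m x y) = hI.quotMul (I.mkQ x) (I.mkQ y) := rfl

lemma IsIdeal.exists_lcSeries_mprod_top_le {I : Submodule F L} (hI : IsIdeal m I)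
    (hss : IsStronglySolvable hI.quotMul ⊤) : ∃ k, lcSeries m (mprod m ⊤ ⊤) k ≤ I := by
  obtain ⟨k, hk⟩ := hss
  refine ⟨k, ?_⟩
  rwa [← range_mkQ I, ← Submodule.map_top, ← map_mprod hI.mkQ_mul, ← map_lcSeries hI.mkQ_mul,
    ← LinearMap.le_ker_iff_map, ker_mkQ] at hk

end Homomorphisms

section NilCriterion

variable {F : Type*} [Field F] {L : Type*} [AddCommGroup L] [Module F L]
variable {m : L →ₗ[F] L →ₗ[F] L}

/-- Left multiplication by a product `xy` acts nilpotently on both factors: `x` and `y` lie in its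
generalized eigenspace for the eigenvalue `0`. This is what strong solvability of the subalgebra
generated by `x` and `y` gives, in a form that visibly passes to quotients. -/
def ProductsNilOnFactors (m : L →ₗ[F] L →ₗ[F] L) : Prop :=
  ∀ x y, x ∈ End.maxGenEigenspace (m (m x y)) 0 ∧ y ∈ End.maxGenEigenspace (m (m x y)) 0

lemma ProductsNilOnFactors.of_surjective {L' : Type*} [AddCommGroup L'] [Module F L']
    {m' : L' →ₗ[F] L' →ₗ[F] L'} {φ : L →ₗ[F] L'} (hφ : ∀ x y, φ (m x y) = m' (φ x) (φ y))
    (hsurj : Function.Surjective φ) (h : ProductsNilOnFactors m) : ProductsNilOnFactors m' := by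
  refine hsurj.forall₂.2 fun x y ↦ ?_
  have hcomp : m' (m' (φ x) (φ y)) ∘ₗ φ = φ ∘ₗ m (m x y) := by
    ext z
    simp only [LinearMap.comp_apply, hφ]
  exact (h x y).imp (map_mem_maxGenEigenspace_zero hcomp) (map_mem_maxGenEigenspace_zero hcomp)

/-- The map `(a, b) ↦ ay + xb` from `A × A` to `A` cannot be injective. -/
lemma IsIdeal.exists_mul_add_mul_eq_zero {A : Submodule F L} [FiniteDimensional F A]
    (hA : IsIdeal m A) (hA0 : A ≠ ⊥) (x y : L) :
    ∃ a ∈ A, ∃ b ∈ A, (a ≠ 0 ∨ b ≠ 0) ∧ m a y + m x b = 0 := by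
  let g : A × A →ₗ[F] A :=
    ((m.flip y).restrict fun a ha ↦ (hA y a ha).2).coprod
      ((m x).restrict fun b hb ↦ (hA x b hb).1)
  have hrank : finrank F A < finrank F (A × A) := by
    have := nontrivial_iff_ne_bot.2 hA0
    rw [finrank_prod]
    exact Nat.lt_add_of_pos_left finrank_pos
  obtain ⟨⟨a, b⟩, hab, hne⟩ :=
    exists_mem_ne_zero_of_ne_bot (LinearMap.ker_ne_bot_of_finrank_lt (f := g) hrank)
  refine ⟨a, a.2, b, b.2, ?_, congrArg Subtype.val (LinearMap.mem_ker.1 hab)⟩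
  contrapose! hne
  exact Prod.ext (Subtype.ext hne.1) (Subtype.ext hne.2)

lemma ProductsNilOnFactors.exists_ne_zero_mem_maxGenEigenspace (h : ProductsNilOnFactors m)
    {A : Submodule F L} [FiniteDimensional F A] (hA : IsIdeal m A) (hA0 : A ≠ ⊥)
    (hAA : mprod m A A = ⊥) (x y : L) :
    ∃ a ∈ A, a ≠ 0 ∧ a ∈ End.maxGenEigenspace (m (m x y)) 0 := by
  obtain ⟨a, ha, b, hb, hne, hab⟩ := hA.exists_mul_add_mul_eq_zero hA0 x y
  have hab0 : m a b = 0 := (mem_bot F).1 (hAA ▸ apply_mem_map₂ m ha hb)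
  have hprod : m (x + a) (y + b) = m x y := calc
    m (x + a) (y + b) = m x y + (m a y + m x b) + m a b := by
      simp only [map_add, LinearMap.add_apply]
      abel
    _ = m x y := by rw [hab, hab0, add_zero, add_zero]
  obtain ⟨hx, hy⟩ := h x y
  obtain ⟨hxa, hyb⟩ := h (x + a) (y + b)
  rw [hprod] at hxa hyb
  rcases hne with ha0 | hb0
  · exact ⟨a, ha, ha0, (add_mem_cancel_left hx).1 hxa⟩
  · exact ⟨b, hb, hb0, (add_mem_cancel_left hy).1 hyb⟩

lemma ProductsNilOnFactors.isStronglySolvable_of_lcSeries_le [FiniteDimensional F L]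
    (h : ProductsNilOnFactors m) (hm : IsLeibniz m) (hsolv : IsSolvableAlg m)
    {A : Submodule F L} (hA : IsMinIdeal m A) {k : ℕ} (hk : lcSeries m (mprod m ⊤ ⊤) k ≤ A) :
    IsStronglySolvable m (⊤ : Submodule F L) := by
  have hAA := hA.mprod_self_eq_bot hm hsolv
  have hleft := hA.1.isLeftIdeal
  have hsing : ∀ x y, (hleft.toEnd (m x y)).maxGenEigenspace 0 ≠ ⊥ := by
    intro x y
    obtain ⟨a, ha, ha0, hnil⟩ := h.exists_ne_zero_mem_maxGenEigenspace hA.1 hA.2.1 hAA x y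
    refine (Submodule.ne_bot_iff _).2 ⟨⟨a, ha⟩, ?_, fun h0 ↦ ha0 (congrArg Subtype.val h0)⟩
    exact (End.genEigenspace_restrict _ A ⊤ 0 (hleft (m x y))).ge hnil
  have hkA : ∀ z ∈ lcSeries m (mprod m ⊤ ⊤) k, hleft.toEnd z = 0 := fun z hz ↦
    hleft.toEnd_eq_zero_iff.2 fun a ha ↦ (mem_bot F).1 (hAA ▸ apply_mem_map₂ m (hk hz) ha)
  have hzero := (hA.isIrreducibleRep_toEnd hm).eq_zero_of_mem_mprod_top hm hsing hkA
  refine ⟨k + 1, eq_bot_iff.2 (map₂_le.2 fun z hz a ha ↦ (mem_bot F).2 ?_)⟩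
  exact hleft.toEnd_eq_zero_iff.1 (hzero z hz) a (hk ha)

theorem ProductsNilOnFactors.isStronglySolvable [FiniteDimensional F L]
    (h : ProductsNilOnFactors m) (hm : IsLeibniz m) (hsolv : IsSolvableAlg m) :
    IsStronglySolvable m (⊤ : Submodule F L) := by
  induction hd : finrank F L using Nat.strong_induction_on generalizing L with
  | _ d ih =>
  subst hd
  rcases subsingleton_or_nontrivial L with hL | hL
  · exact ⟨0, Subsingleton.elim _ _⟩
  obtain ⟨A, hA⟩ := exists_isMinIdeal m
  have hmul := hA.1.mkQ_mul
  have hsolv' : IsSolvableAlg hA.1.quotMul := by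
    simpa only [Submodule.map_top, range_mkQ] using hsolv.map hmul
  have hlt : finrank F (L ⧸ A) < finrank F L := by
    have := nontrivial_iff_ne_bot.2 hA.2.1
    exact A.finrank_quotient_add_finrank ▸ Nat.lt_add_of_pos_right finrank_pos
  obtain ⟨k, hk⟩ := hA.1.exists_lcSeries_mprod_top_le <|
    ih _ hlt (h.of_surjective hmul A.mkQ_surjective) (hm.of_surjective hmul A.mkQ_surjective)
      hsolv' rfl
  exact h.isStronglySolvable_of_lcSeries_le hm hsolv hA hk

end NilCriterion

section GeneratedSubalgebras

variable {F : Type*} [Field F] {L : Type*} [AddCommGroup L] [Module F L]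
variable {m : L →ₗ[F] L →ₗ[F] L}

lemma isSubalg_genBy (m : L →ₗ[F] L →ₗ[F] L) (s : Set L) : IsSubalg m (genBy m s) :=
  fun x hx y hy ↦ mem_sInf.2 fun S hS ↦ hS.1 x (mem_sInf.1 hx S hS) y (mem_sInf.1 hy S hS)

lemma subset_genBy (m : L →ₗ[F] L →ₗ[F] L) (s : Set L) : s ⊆ genBy m s :=
  fun _ hx ↦ mem_sInf.2 fun _ hS ↦ hS.2 hx

lemma pow_apply_mem_lcSeries {N : Submodule F L} {z x : L} (hz : z ∈ N) (hx : x ∈ N) (n : ℕ) :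
    ((m z : End F L) ^ n) x ∈ lcSeries m N n := by
  induction n with
  | zero => exact hx
  | succ n ih =>
    rw [pow_succ', End.mul_apply]
    exact apply_mem_map₂ m hz ih

lemma IsNilpotentSub.mem_maxGenEigenspace {N : Submodule F L} (hN : IsNilpotentSub m N)
    {z x : L} (hz : z ∈ N) (hzx : m z x ∈ N) : x ∈ End.maxGenEigenspace (m z) 0 := by
  obtain ⟨k, hk⟩ := hN
  refine mem_maxGenEigenspace_zero.2 ⟨k + 1, ?_⟩
  rw [pow_succ, End.mul_apply, ← mem_bot F, ← hk]
  exact pow_apply_mem_lcSeries hz hzx k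

lemma productsNilOnFactors_of_isStronglySolvable_genBy
    (h : ∀ x y, IsStronglySolvable m (genBy m {x, y})) : ProductsNilOnFactors m := by
  intro x y
  have hx : x ∈ genBy m {x, y} := subset_genBy m _ (Set.mem_insert x {y})
  have hy : y ∈ genBy m {x, y} := subset_genBy m _ (Set.mem_insert_of_mem x rfl)
  have hxy := isSubalg_genBy m {x, y} x hx y hy
  exact ⟨(h x y).mem_maxGenEigenspace (apply_mem_map₂ m hx hy) (apply_mem_map₂ m hxy hx),
    (h x y).mem_maxGenEigenspace (apply_mem_map₂ m hx hy) (apply_mem_map₂ m hxy hy)⟩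

end GeneratedSubalgebras

theorem minimally_non_strongly_solvable_two_generated_general
    {F : Type*} [Field F] {L : Type*} [AddCommGroup L] [Module F L] [FiniteDimensional F L]
    (m : L →ₗ[F] L →ₗ[F] L) (hm : IsLeibniz m) (hsolv : IsSolvableAlg m)
    (hnotss : ¬ IsStronglySolvable m (⊤ : Submodule F L)) :
    ∃ x y : L, ¬ IsStronglySolvable m (genBy m {x, y}) := by
  by_contra! h
  exact hnotss ((productsNilOnFactors_of_isStronglySolvable_genBy h).isStronglySolvable hm hsolv)

/-- A finite-dimensional solvable Leibniz algebra that is minimally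
non-strongly-solvable (not strongly solvable, but every proper subalgebra is strongly
solvable) is two-generated. -/
theorem minimally_non_strongly_solvable_two_generated
    {F : Type*} [Field F] {L : Type*} [AddCommGroup L] [Module F L]
    [FiniteDimensional F L]
    (m : L →ₗ[F] L →ₗ[F] L) (hm : IsLeibniz m)
    (hsolv : IsSolvableAlg m)
    (hnotss : ¬ IsStronglySolvable m (⊤ : Submodule F L))
    (hproper : ∀ S : Submodule F L, IsSubalg m S → S ≠ ⊤ → IsStronglySolvable m S) :
    ∃ x y : L, genBy m {x, y} = ⊤ := by
  obtain ⟨x, y, hxy⟩ := minimally_non_strongly_solvable_two_generated_general m hm hsolv hnotss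
  exact ⟨x, y, not_imp_comm.1 (hproper _ (isSubalg_genBy m _)) hxy⟩
end
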